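/- For n ≥ 2 let U_n(t) = ∑ t^{des(π)} over permutations π of length n avoiding the consecutive pattern 1̲3̲2 with π₁ < π₂, and V_n(t) = ∑ t^{des(π)} over permutations π of length n avoiding 1̲3̲2 with π₁ > π₂ (and U_0 = U_1 = V_0 = V_1 = 0). Then for all n ≥ 3: U_{n+1}(t) = (1+t)·U_n(t) + t·n·U_{n−1}(t) + t·∑_{i=2}^{n−2} binom(n,i)·U_i(t)·U_{n−i}(t), and V_{n+1}(t) = t·V_n(t) + t·n·V_{n−1}(t) + t·∑_{i=2}^{n−2} binom(n,i)·V_i(t)·U_{n−i}(t) + t·n·U_{n−1}(t); moreover, for all n ≥ 2, ∑_{π ∈ S_n(1̲3̲2)} t^{des(π)} = U_n(t) + V_n(t). -/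

import Mathlib

open scoped Classical

/-- The number of descents of a permutation of `Fin n` (one-line notation `π 0, π 1, …`). -/
def des {n : ℕ} (π : Equiv.Perm (Fin n)) : ℕ :=
  (Finset.univ.filter fun i : Fin n =>
    ∃ h : (i : ℕ) + 1 < n, π ⟨(i : ℕ) + 1, h⟩ < π i).card

/-- `π` avoids the consecutive pattern 1̲3̲2: there is no (0-indexed) position `i` with
`i + 2 < n` such that `π_i < π_{i+2} < π_{i+1}`. -/
def AvoidsC132 {n : ℕ} (π : Equiv.Perm (Fin n)) : Prop :=
  ¬ ∃ (i : ℕ) (h : i + 2 < n),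
      π ⟨i, by omega⟩ < π ⟨i + 2, h⟩ ∧ π ⟨i + 2, h⟩ < π ⟨i + 1, by omega⟩

/-- `U_n(t) = ∑ t^{des(π)}` over 1̲3̲2-avoiding permutations of length `n` with
`π₁ < π₂` (so `U_0 = U_1 = 0`). -/
noncomputable def U (n : ℕ) : Polynomial ℚ :=
  ∑ π ∈ Finset.univ.filter (fun π : Equiv.Perm (Fin n) =>
      AvoidsC132 π ∧ ∃ h : 1 < n, π ⟨0, by omega⟩ < π ⟨1, h⟩),
    Polynomial.X ^ des π

/-- `V_n(t) = ∑ t^{des(π)}` over 1̲3̲2-avoiding permutations of length `n` with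
`π₁ > π₂` (so `V_0 = V_1 = 0`). -/
noncomputable def V (n : ℕ) : Polynomial ℚ :=
  ∑ π ∈ Finset.univ.filter (fun π : Equiv.Perm (Fin n) =>
      AvoidsC132 π ∧ ∃ h : 1 < n, π ⟨1, h⟩ < π ⟨0, by omega⟩),
    Polynomial.X ^ des π

section helpers

def desL {α : Type*} [LinearOrder α] : List α → ℕ
  | a :: b :: l => (if b < a then 1 else 0) + desL (b :: l)
  | _ => 0

def avL {α : Type*} [LinearOrder α] : List α → Prop
  | a :: b :: c :: l => ¬ (a < c ∧ c < b) ∧ avL (b :: c :: l)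
  | _ => True

def fstL {α : Type*} [LinearOrder α] : List α → Option Bool
  | a :: b :: _ => some (decide (a < b))
  | _ => none

noncomputable def wt {α : Type*} [LinearOrder α] (o : Option Bool) (l : List α) : Polynomial ℚ :=
  if avL l ∧ fstL l = o then Polynomial.X ^ desL l else 0

noncomputable def lst {α : Type*} (S : Finset α) : Finset (List α) := S.val.lists.toFinset

theorem mem_lst' {α : Type*} (S : Finset α) (l : List α) :
    l ∈ lst S ↔ S.val = (l : Multiset α) := by
  unfold lst
  rw [Multiset.mem_toFinset, Multiset.mem_lists_iff]
  rfl

theorem mem_lst {α : Type*} (S : Finset α) (l : List α) :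
    l ∈ lst S ↔ l.Nodup ∧ ∀ x, x ∈ l ↔ x ∈ S := by
  unfold lst
  rw [Multiset.mem_toFinset, Multiset.mem_lists_iff]
  constructor
  · intro h
    have h2 := S.nodup
    rw [h] at h2
    refine ⟨by simpa using h2, fun x => ?_⟩
    rw [← Finset.mem_val, h]; simp
  · rintro ⟨h1, h2⟩
    change S.val = (l : Multiset α)
    rw [Multiset.Nodup.ext S.nodup (by simpa using h1)]
    intro x
    simp [h2]

noncomputable def FF {α : Type*} [LinearOrder α] (o : Option Bool) (S : Finset α) :
    Polynomial ℚ := ∑ l ∈ lst S, wt o l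

theorem desL_map {α β : Type*} [LinearOrder α] [LinearOrder β] (f : α ↪o β) (l : List α) :
    desL (l.map f) = desL l := by
  induction l with
  | nil => rfl
  | cons a l ih =>
    cases l with
    | nil => rfl
    | cons b l => simp only [List.map_cons, desL] at ih ⊢; rw [ih]; simp

theorem avL_map {α β : Type*} [LinearOrder α] [LinearOrder β] (f : α ↪o β) (l : List α) :
    avL (l.map f) ↔ avL l := by
  induction l with
  | nil => rfl
  | cons a l ih =>
    rcases l with _ | ⟨b, _ | ⟨c, l⟩⟩
    · rfl
    · rfl
    · simp only [List.map_cons, avL] at ih ⊢; rw [ih]; simp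

theorem fstL_map {α β : Type*} [LinearOrder α] [LinearOrder β] (f : α ↪o β) (l : List α) :
    fstL (l.map f) = fstL l := by
  rcases l with _ | ⟨b, _ | ⟨c, l⟩⟩ <;> simp [fstL]

theorem FF_map {α β : Type*} [LinearOrder α] [LinearOrder β] (f : α ↪o β) (o : Option Bool)
    (S : Finset α) : FF o (S.map f.toEmbedding) = FF o S := by
  symm
  unfold FF
  refine Finset.sum_bij (fun l _ => l.map f) ?_ ?_ ?_ ?_
  · intro l hl
    rw [mem_lst] at hl ⊢
    refine ⟨hl.1.map f.injective, fun x => ?_⟩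
    simp [hl.2]
  · intro a _ b _ h
    exact List.map_injective_iff.2 f.injective h
  · intro l hl
    rw [mem_lst] at hl
    have h : ∀ x ∈ l, x ∈ Set.range f := by
      intro x hx
      have := (hl.2 x).1 hx
      simp at this
      obtain ⟨a, _, h⟩ := this
      exact ⟨a, h⟩
    have h' : l ∈ Set.range (List.map f) := by
      rw [Set.range_list_map]; exact h
    obtain ⟨m, rfl⟩ := h'
    refine ⟨m, ?_, rfl⟩
    rw [mem_lst]
    refine ⟨List.Nodup.of_map _ hl.1, fun x => ?_⟩
    have := hl.2 (f x)
    simpa using this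
  · intro l _
    simp [wt, desL_map, avL_map, fstL_map]

theorem FF_card {α : Type*} [LinearOrder α] (o : Option Bool) (S : Finset α) :
    FF o S = FF o (Finset.univ : Finset (Fin S.card)) := by
  rw [← FF_map (S.orderEmbOfFin rfl)]
  congr 1
  ext x
  have := Finset.range_orderEmbOfFin S rfl
  have h : x ∈ Set.range (S.orderEmbOfFin rfl) ↔ x ∈ (S : Set α) := by rw [this]
  simpa using h.symm

/-- bridging -/
theorem desL_eq {α : Type*} [LinearOrder α] (l : List α) :
    desL l = ∑ i : Fin l.length, if ∃ h : (i : ℕ) + 1 < l.length, l[(i : ℕ) + 1] < l[(i : ℕ)]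
      then 1 else 0 := by
  induction l with
  | nil => rfl
  | cons a l ih =>
    cases l with
    | nil => simp [desL]
    | cons b l =>
      rw [desL, ih]
      symm
      refine (Fin.sum_univ_succ _).trans ?_
      congr 1
      · simp
      · refine Finset.sum_congr rfl fun i _ => ?_
        simp

theorem avL_iff {α : Type*} [LinearOrder α] (l : List α) :
    avL l ↔ ¬ ∃ (i : ℕ) (h : i + 2 < l.length), l[i] < l[i + 2] ∧ l[i + 2] < l[i + 1] := by
  induction l with
  | nil => simp [avL]
  | cons a l ih =>
    rcases l with _ | ⟨b, _ | ⟨c, l⟩⟩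
    · simp [avL]
    · simp [avL]
    · rw [avL, ih]
      constructor
      · rintro ⟨h1, h2⟩ ⟨i, hi, h3⟩
        cases i with
        | zero => exact h1 (by simpa using h3)
        | succ i => exact h2 ⟨i, by simpa using hi, by simpa using h3⟩
      · intro h
        constructor
        · intro h1; exact h ⟨0, by simp, by simpa using h1⟩
        · rintro ⟨i, hi, h3⟩
          exact h ⟨i + 1, by simpa using hi, by simpa using h3⟩

theorem desL_ofFn {n : ℕ} (π : Equiv.Perm (Fin n)) : desL (List.ofFn π) = des π := by
  rw [desL_eq, des, Finset.card_filter]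
  refine Fintype.sum_equiv (finCongr (by simp)) _ _ fun i => ?_
  simp
  rfl

theorem avL_ofFn {n : ℕ} (π : Equiv.Perm (Fin n)) : avL (List.ofFn π) ↔ AvoidsC132 π := by
  rw [avL_iff, AvoidsC132]
  simp

theorem fstL_ofFn_true {n : ℕ} (π : Equiv.Perm (Fin n)) :
    fstL (List.ofFn π) = some true ↔ ∃ h : 1 < n, π ⟨0, by omega⟩ < π ⟨1, h⟩ := by
  rcases n with _ | _ | n
  · simp [fstL]
  · exact ⟨fun h => by simp [fstL] at h, fun ⟨h, _⟩ => by omega⟩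
  · simp [fstL, List.ofFn_succ]

theorem fstL_ofFn_false {n : ℕ} (π : Equiv.Perm (Fin n)) :
    fstL (List.ofFn π) = some false ↔ ∃ h : 1 < n, π ⟨1, h⟩ < π ⟨0, by omega⟩ := by
  rcases n with _ | _ | n
  · simp [fstL]
  · exact ⟨fun h => by simp [fstL] at h, fun ⟨h, _⟩ => by omega⟩
  · simp only [fstL, List.ofFn_succ, Option.some.injEq, decide_eq_false_iff_not, not_lt]
    constructor
    · intro h
      exact ⟨by omega, lt_of_le_of_ne h (by simp)⟩
    · rintro ⟨_, h⟩
      exact h.le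

theorem sum_ofFn {n : ℕ} (o : Option Bool) :
    ∑ π : Equiv.Perm (Fin n), wt o (List.ofFn π) = FF o (Finset.univ : Finset (Fin n)) := by
  unfold FF
  refine Finset.sum_bij (fun π _ => List.ofFn π) ?_ ?_ ?_ ?_
  · intro π _
    rw [mem_lst]
    refine ⟨List.nodup_ofFn.2 π.injective, fun x => ?_⟩
    simp [List.mem_ofFn, π.surjective x]
  · intro a _ b _ h
    exact DFunLike.coe_injective (List.ofFn_injective h)
  · intro l hl
    rw [mem_lst] at hl
    have hlen : l.length = n := by
      have h1 : l.toFinset = Finset.univ := by ext x; simp [hl.2]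
      have := List.toFinset_card_of_nodup hl.1
      rw [h1] at this; simpa using this.symm
    have hi : Function.Injective (fun i : Fin n => l.get (i.cast hlen.symm)) := by
      intro i j h
      have := List.nodup_iff_injective_get.1 hl.1 h
      simpa using this
    refine ⟨Equiv.ofBijective _ (Finite.injective_iff_bijective.1 hi), Finset.mem_univ _, ?_⟩
    apply List.ext_getElem
    · simp [hlen]
    · intro i h1 h2
      simp
  · intro _ _; rfl

theorem U_eq (n : ℕ) : U n = FF (some true) (Finset.univ : Finset (Fin n)) := by
  rw [← sum_ofFn, U, Finset.sum_filter]
  refine Finset.sum_congr rfl fun π _ => ?_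
  simp only [wt, avL_ofFn, desL_ofFn, fstL_ofFn_true]

theorem V_eq (n : ℕ) : V n = FF (some false) (Finset.univ : Finset (Fin n)) := by
  rw [← sum_ofFn, V, Finset.sum_filter]
  refine Finset.sum_congr rfl fun π _ => ?_
  simp only [wt, avL_ofFn, desL_ofFn, fstL_ofFn_false]

/-- append -/
theorem desL_app {α : Type*} [LinearOrder α] (m : α) (s t : List α) (hs : ∀ x ∈ s, m < x)
    (ht : ∀ x ∈ t, m < x) :
    desL (s ++ m :: t) = desL s + desL t + (if s = [] then 0 else 1) := by
  induction s with
  | nil =>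
    rcases t with _ | ⟨b, t⟩
    · simp [desL]
    · have := ht b (by simp)
      simp [desL, this.le]
  | cons a s ih =>
    have ih := ih fun x hx => hs x (by simp [hx])
    rcases s with _ | ⟨b, s⟩
    · have := hs a (by simp)
      simp [desL] at ih ⊢
      rw [ih]; simp [this]; omega
    · simp [desL] at ih ⊢
      rw [ih]; omega

theorem avL_app {α : Type*} [LinearOrder α] (m : α) (s t : List α) (hs : ∀ x ∈ s, m < x)
    (ht : ∀ x ∈ t, m < x) (htn : t.Nodup) :
    avL (s ++ m :: t) ↔ avL s ∧ avL t ∧ fstL t ≠ some false := by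
  induction s with
  | nil =>
    rcases t with _ | ⟨b, _ | ⟨c, t⟩⟩
    · simp [avL, fstL]
    · simp [avL, fstL]
    · have := ht c (by simp)
      have hbc : b ≠ c := by simp at htn; tauto
      simp [avL, fstL, this]
      constructor
      · rintro ⟨h1, h2⟩
        exact ⟨h2, lt_of_le_of_ne h1 hbc⟩
      · rintro ⟨h1, h2⟩
        exact ⟨h2.le, h1⟩
  | cons a s ih =>
    have ih := ih fun x hx => hs x (by simp [hx])
    have ha := hs a (by simp)
    rcases s with _ | ⟨b, _ | ⟨c, s⟩⟩
    · rcases t with _ | ⟨b, t⟩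
      · simp [avL, fstL]
      · have : avL (a :: m :: b :: t) ↔ avL (m :: b :: t) := by
          have := ht b (by simp)
          simp [avL, this.le]
        simpa [avL, this] using ih
    · simp [avL] at ih ⊢
      rw [ih]
      simp [ha.le]
    · simp [avL] at ih ⊢
      rw [ih]
      tauto

theorem fstL_app {α : Type*} [LinearOrder α] (m : α) (s t : List α) (hs : ∀ x ∈ s, m < x)
    (ht : ∀ x ∈ t, m < x) (hn : s.length + t.length ≠ 0) :
    fstL (s ++ m :: t) = if s.length = 0 then some true else if s.length = 1 then some false
      else fstL s := by
  rcases s with _ | ⟨b, _ | ⟨c, s⟩⟩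
  · rcases t with _ | ⟨b, t⟩
    · simp at hn
    · have := ht b (by simp)
      simp [fstL, this]
  · have := hs b (by simp)
    simp [fstL, this.le]
  · simp [fstL]

noncomputable def hw {α : Type*} [LinearOrder α] (o : Bool) (l : List α) : Polynomial ℚ :=
  (if o = true ∧ l.length = 0 then 1 else 0) + (if o = false ∧ l.length = 1 then Polynomial.X else 0)
    + Polynomial.X * wt (some o) l

theorem wt_app {α : Type*} [LinearOrder α] (o : Bool) (m : α) (s t : List α)
    (hs : ∀ x ∈ s, m < x) (ht : ∀ x ∈ t, m < x) (htn : t.Nodup) (hn : s.length + t.length ≠ 0) :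
    wt (some o) (s ++ m :: t) = hw o s * (wt (some true) t + wt none t) := by
  unfold hw wt
  rw [desL_app m s t hs ht, avL_app m s t hs ht htn, fstL_app m s t hs ht hn]
  by_cases h1 : avL t
  swap
  · simp [h1]
  have key : (if avL t ∧ fstL t = some true then (Polynomial.X : Polynomial ℚ) ^ desL t else 0) +
      (if avL t ∧ fstL t = none then Polynomial.X ^ desL t else 0) =
      if fstL t ≠ some false then Polynomial.X ^ desL t else 0 := by
    rcases h : fstL t with _ | _ | _ <;> simp [h1]
  rw [key]
  by_cases h2 : fstL t = some false
  · simp [h2]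
  have e0 : avL ([] : List α) := trivial
  have e1 : ∀ b : α, avL [b] := fun _ => trivial
  have e2 : fstL ([] : List α) = none := rfl
  have e3 : ∀ b : α, fstL [b] = none := fun _ => rfl
  have e4 : desL ([] : List α) = 0 := rfl
  have e5 : ∀ b : α, desL [b] = 0 := fun _ => rfl
  clear key
  generalize fstL t = ft at *
  rcases s with _ | ⟨b, _ | ⟨c, s⟩⟩
  · cases o <;> simp [h1, h2, e0, e2, e4]
  · cases o <;> simp [h1, h2, e1, e3, e5]
    ring
  · have g0 : (b :: c :: s).length ≠ 0 := by simp
    have g1 : (b :: c :: s).length ≠ 1 := by simp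
    have g2 : (b :: c :: s) ≠ [] := by simp
    generalize b :: c :: s = u at *
    by_cases hu : avL u ∧ fstL u = some o
    · obtain ⟨hu1, hu2⟩ := hu
      simp [h1, h2, g0, g1, g2, hu1, hu2]
      ring
    · have hu' : ¬ ((avL u ∧ avL t ∧ ft ≠ some false) ∧ fstL u = some o) := by tauto
      simp only [g0, g1, if_false, and_false, if_neg hu, if_neg hu']
      simp

theorem length_lst {α : Type*} {S : Finset α} {l : List α} (h : l ∈ lst S) :
    l.length = S.card := by
  unfold lst at h
  rw [Multiset.mem_toFinset, Multiset.mem_lists_iff] at h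
  rw [Finset.card, h]; simp

theorem decomp {n : ℕ} (hn : n ≠ 0) (o : Bool) :
    FF (some o) (Finset.univ : Finset (Fin (n + 1))) =
      ∑ A ∈ (Finset.univ.erase (0 : Fin (n + 1))).powerset,
        (∑ s ∈ lst A, hw o s) *
          (FF (some true) (Finset.univ.erase 0 \ A) + FF none (Finset.univ.erase 0 \ A)) := by
  have e : ∀ A ∈ (Finset.univ.erase (0 : Fin (n + 1))).powerset,
      (∑ s ∈ lst A, hw o s) *
          (FF (some true) (Finset.univ.erase 0 \ A) + FF none (Finset.univ.erase 0 \ A)) =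
      ∑ p ∈ lst A ×ˢ lst (Finset.univ.erase 0 \ A), wt (some o) (p.1 ++ 0 :: p.2) := by
    intro A hA
    rw [Finset.mem_powerset] at hA
    unfold FF
    rw [← Finset.sum_add_distrib, Finset.sum_mul_sum, Finset.sum_product]
    refine Finset.sum_congr rfl fun s hs => Finset.sum_congr rfl fun t ht => ?_
    symm
    have l1 := length_lst hs
    have l2 := length_lst ht
    rw [mem_lst] at hs ht
    apply wt_app
    · intro x hx
      have := hA ((hs.2 x).1 hx)
      simp at this
      exact Fin.pos_iff_ne_zero.2 this
    · intro x hx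
      have := (ht.2 x).1 hx
      simp at this
      exact Fin.pos_iff_ne_zero.2 this.1
    · exact ht.1
    · rw [l1, l2]
      have := Finset.card_sdiff_add_card_eq_card hA
      simp at this
      omega
  rw [Finset.sum_congr rfl e, Finset.sum_sigma']
  symm
  unfold FF
  refine Finset.sum_bij (fun p _ => p.2.1 ++ 0 :: p.2.2) ?_ ?_ ?_ ?_
  · rintro ⟨A, s, t⟩ h
    simp [mem_lst] at h
    simp only [mem_lst, List.nodup_append, List.nodup_cons]
    obtain ⟨hA, ⟨hs, hs'⟩, ht, ht'⟩ := h
    have h0 : (0 : Fin (n + 1)) ∉ A := fun h => by simpa using hA h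
    grind
  · rintro ⟨A, s, t⟩ h ⟨A', s', t'⟩ h' heq
    simp [mem_lst] at h h' heq
    obtain ⟨hA, ⟨hs, hs'⟩, ht, ht'⟩ := h
    obtain ⟨hA', ⟨hhs, hhs'⟩, hht, hht'⟩ := h'
    have h0 : (0 : Fin (n + 1)) ∉ A := fun h => by simpa using hA h
    have h0' : (0 : Fin (n + 1)) ∉ A' := fun h => by simpa using hA' h
    have a1 : (0 : Fin (n + 1)) ∉ s := by grind
    have a2 : (0 : Fin (n + 1)) ∉ s' := by grind
    have a3 : (0 : Fin (n + 1)) ∉ t := by grind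
    have a4 : (0 : Fin (n + 1)) ∉ t' := by grind
    have hst : s = s' ∧ t = t' := by
      rw [List.append_eq_append_iff] at heq
      rcases heq with ⟨a, h1, h2⟩ | ⟨a, h1, h2⟩ <;> cases a <;> grind
    obtain ⟨rfl, rfl⟩ := hst
    have : A = A' := by ext x; rw [← hs', hhs']
    subst this
    rfl
  · intro l hl
    rw [mem_lst] at hl
    obtain ⟨s, t, rfl⟩ := List.append_of_mem ((hl.2 0).2 (Finset.mem_univ _))
    obtain ⟨h1, h2⟩ := hl
    rw [List.nodup_append, List.nodup_cons] at h1
    refine ⟨⟨s.toFinset, s, t⟩, ?_, rfl⟩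
    simp [mem_lst]
    simp at h2
    refine ⟨?_, ?_, ?_, ?_⟩
    · intro x hx
      simp at hx ⊢
      grind
    · grind
    · grind
    · grind
  · intro _ _; rfl

theorem FF_none {α : Type*} [LinearOrder α] (S : Finset α) :
    FF none S = if S.card ≤ 1 then 1 else 0 := by
  unfold FF
  split_ifs with h
  · have h : S.card = 0 ∨ S.card = 1 := by omega
    rcases h with h | h
    · rw [Finset.card_eq_zero] at h
      subst h
      have : lst (∅ : Finset α) = {[]} := by
        ext l; rw [mem_lst]; simp; constructor
        · rintro ⟨_, h⟩; exact List.eq_nil_iff_forall_not_mem.2 h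
        · rintro rfl; simp
      rw [this]; simp [wt, avL, fstL, desL]
    · rw [Finset.card_eq_one] at h
      obtain ⟨a, rfl⟩ := h
      have : lst ({a} : Finset α) = {[a]} := by
        ext l
        rw [mem_lst', eq_comm]
        simp
      rw [this]; simp [wt, avL, fstL, desL]
  · refine Finset.sum_eq_zero fun l hl => ?_
    have := length_lst hl
    rcases l with _ | ⟨b, _ | ⟨c, s⟩⟩
    · simp at this; omega
    · simp at this; omega
    · simp [wt, fstL]

theorem FF_hw {α : Type*} [LinearOrder α] (o : Bool) (S : Finset α) :
    ∑ s ∈ lst S, hw o s = (if o = true ∧ S.card = 0 then 1 else 0) +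
      (if o = false ∧ S.card = 1 then Polynomial.X else 0) + Polynomial.X * FF (some o) S := by
  have h1 : ∀ s ∈ lst S, hw o s = ((if o = true ∧ S.card = 0 then 1 else 0) +
      (if o = false ∧ S.card = 1 then Polynomial.X else 0)) * wt none s
        + Polynomial.X * wt (some o) s := by
    intro s hs
    have := length_lst hs
    rw [← this, hw]
    congr 1
    rcases s with _ | ⟨b, _ | ⟨c, s⟩⟩ <;> simp [wt, fstL, avL, desL]
  rw [Finset.sum_congr rfl h1, Finset.sum_add_distrib, ← Finset.mul_sum, ← Finset.mul_sum]
  have := FF_none S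
  unfold FF at this ⊢
  rw [this]
  congr 1
  by_cases h : S.card ≤ 1
  · simp [h]
  · have a : S.card ≠ 0 := by omega
    have b : S.card ≠ 1 := by omega
    simp [a, b]

noncomputable def W (o : Bool) (n : ℕ) : Polynomial ℚ :=
  FF (some o) (Finset.univ : Finset (Fin n))

theorem W_small (o : Bool) (n : ℕ) (h : n ≤ 1) : W o n = 0 := by
  unfold W FF
  refine Finset.sum_eq_zero fun l hl => ?_
  have := length_lst hl
  rcases l with _ | ⟨b, _ | ⟨c, s⟩⟩
  · simp [wt, fstL]
  · simp [wt, fstL]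
  · simp at this; omega

theorem main_rec {n : ℕ} (hn : n ≠ 0) (o : Bool) :
    W o (n + 1) = ∑ i ∈ Finset.range (n + 1), (n.choose i : Polynomial ℚ) *
      (((if o = true ∧ i = 0 then 1 else 0) +
      (if o = false ∧ i = 1 then Polynomial.X else 0) + Polynomial.X * W o i) *
      (W true (n - i) + if n - i ≤ 1 then 1 else 0)) := by
  have hc : (Finset.univ.erase (0 : Fin (n + 1))).card = n := by simp
  have := Finset.sum_powerset_apply_card (fun i =>
      (((if o = true ∧ i = 0 then 1 else 0) +
      (if o = false ∧ i = 1 then Polynomial.X else 0) + Polynomial.X * W o i) *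
      (W true (n - i) + if n - i ≤ 1 then 1 else 0))) (x := Finset.univ.erase (0 : Fin (n + 1)))
  rw [hc] at this
  simp only [nsmul_eq_mul] at this
  rw [← this, W, decomp hn]
  refine Finset.sum_congr rfl fun A hA => ?_
  rw [Finset.mem_powerset] at hA
  have hB : (Finset.univ.erase 0 \ A).card = n - A.card := by
    rw [Finset.card_sdiff_of_subset hA, hc]
  rw [FF_hw, FF_none, FF_card (some true) (_ \ A), FF_card (some o) A, hB]
  rfl

theorem range_split {M : Type*} [AddCommMonoid M] (f : ℕ → M) (n : ℕ) (hn : 3 ≤ n) :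
    ∑ i ∈ Finset.range (n + 1), f i =
      f 0 + f 1 + (∑ i ∈ Finset.Icc 2 (n - 2), f i) + f (n - 1) + f n := by
  obtain ⟨k, rfl⟩ : ∃ k, n = k + 3 := ⟨n - 3, by omega⟩
  have : Finset.Icc 2 (k + 3 - 2) = Finset.Ico 2 (k + 2) := by ext x; simp; omega
  rw [Finset.sum_range_succ, Finset.sum_range_succ, this,
    ← Finset.sum_range_add_sum_Ico f (show 2 ≤ k + 2 by omega)]
  simp [Finset.sum_range_succ]

end helpers

/-- For all `n ≥ 3`,
`U_{n+1} = (1+t)·U_n + t·n·U_{n−1} + t·∑_{i=2}^{n−2} C(n,i)·U_i·U_{n−i}` and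
`V_{n+1} = t·V_n + t·n·V_{n−1} + t·∑_{i=2}^{n−2} C(n,i)·V_i·U_{n−i} + t·n·U_{n−1}`;
moreover, for all `n ≥ 2`, `∑_{π ∈ S_n(1̲3̲2)} t^{des(π)} = U_n + V_n`. -/
theorem statement19 :
    (∀ n : ℕ, 3 ≤ n →
      U (n + 1) =
        (1 + Polynomial.X) * U n + Polynomial.X * (n : Polynomial ℚ) * U (n - 1) +
          Polynomial.X *
            ∑ i ∈ Finset.Icc 2 (n - 2), (n.choose i : Polynomial ℚ) * U i * U (n - i)) ∧
    (∀ n : ℕ, 3 ≤ n →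
      V (n + 1) =
        Polynomial.X * V n + Polynomial.X * (n : Polynomial ℚ) * V (n - 1) +
          Polynomial.X *
            (∑ i ∈ Finset.Icc 2 (n - 2), (n.choose i : Polynomial ℚ) * V i * U (n - i)) +
          Polynomial.X * (n : Polynomial ℚ) * U (n - 1)) ∧
    (∀ n : ℕ, 2 ≤ n →
      (∑ π ∈ Finset.univ.filter (fun π : Equiv.Perm (Fin n) => AvoidsC132 π),
          Polynomial.X ^ des π) = U n + V n) := by
  have hU : U = W true := funext U_eq
  have hV : V = W false := funext V_eq
  refine ⟨?_, ?_, ?_⟩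
  · intro n hn
    rw [hU, main_rec (by omega), range_split _ n hn]
    have e : ∀ i ∈ Finset.Icc 2 (n - 2), (n.choose i : Polynomial ℚ) *
      (((if true = true ∧ i = 0 then 1 else 0) +
      (if true = false ∧ i = 1 then Polynomial.X else 0) + Polynomial.X * W true i) *
      (W true (n - i) + if n - i ≤ 1 then 1 else 0)) =
      Polynomial.X * ((n.choose i : Polynomial ℚ) * W true i * W true (n - i)) := by
      intro i hi
      rw [Finset.mem_Icc] at hi
      have h1 : i ≠ 0 := by omega
      have h2 : ¬ (n - i ≤ 1) := by omega
      simp [h1, h2]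
      ring
    rw [Finset.sum_congr rfl e, ← Finset.mul_sum]
    have a1 : n - (n - 1) = 1 := by omega
    have a2 : n - 1 ≠ 0 := by omega
    have a3 : n ≠ 0 := by omega
    have a4 : ¬ (n ≤ 1) := by omega
    have a5 : n.choose (n - 1) = n := by
      rw [Nat.choose_symm (by omega)]; simp
    simp [a1, a2, a3, a4, a5, W_small]
    ring
  · intro n hn
    rw [hU, hV, main_rec (by omega), range_split _ n hn]
    have e : ∀ i ∈ Finset.Icc 2 (n - 2), (n.choose i : Polynomial ℚ) *
      (((if false = true ∧ i = 0 then 1 else 0) +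
      (if false = false ∧ i = 1 then Polynomial.X else 0) + Polynomial.X * W false i) *
      (W true (n - i) + if n - i ≤ 1 then 1 else 0)) =
      Polynomial.X * ((n.choose i : Polynomial ℚ) * W false i * W true (n - i)) := by
      intro i hi
      rw [Finset.mem_Icc] at hi
      have h1 : i ≠ 1 := by omega
      have h2 : ¬ (n - i ≤ 1) := by omega
      simp [h1, h2]
      ring
    rw [Finset.sum_congr rfl e, ← Finset.mul_sum]
    have a1 : n - (n - 1) = 1 := by omega
    have a2 : n - 1 ≠ 1 := by omega
    have a3 : n ≠ 1 := by omega
    have a4 : ¬ (n - 1 ≤ 1) := by omega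
    have a6 : ¬ (n ≤ 2) := by omega
    have a7 : ¬ (n ≤ 1) := by omega
    have a5 : n.choose (n - 1) = n := by
      rw [Nat.choose_symm (by omega)]; simp
    simp [a1, a2, a3, a4, a5, a6, a7, W_small]
    ring
  · intro n hn
    unfold U V
    rw [← Finset.sum_union]
    · refine Finset.sum_congr ?_ fun _ _ => rfl
      ext π
      have h1 : 1 < n := by omega
      have : π ⟨0, by omega⟩ ≠ π ⟨1, h1⟩ := by simp
      have := lt_or_gt_of_ne this
      simp only [Finset.mem_filter, Finset.mem_union, Finset.mem_univ, true_and]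
      constructor
      · intro ha
        exact this.imp (fun h => ⟨ha, h1, h⟩) (fun h => ⟨ha, h1, h⟩)
      · rintro (h | h) <;> exact h.1
    · rw [Finset.disjoint_filter]
      rintro π _ ⟨_, h, h1⟩ ⟨_, _, h2⟩
      exact absurd h1 h2.asymm
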